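/- arXiv:1110.3182 — 2 statements merged into one kernel-verified Lean document; each statement's English description precedes it below -/
import Mathlib

section
/- Let k ≥ 1 and let 𝒜 be a finite family of k-element finite subsets of ℕ with |𝒜| ≤ ξ_k := Σ_{j=1}^{k} C(2j-1, j). Then the shadow ∂𝒜 satisfies |∂𝒜| ≥ |𝒜|. -/
/-!
By the Kruskal–Katona theorem we may assume that the family `𝒞` of `k`-sets is an initial segment of
the colexicographic order on a set `{0, …, N - 1}`. If no member of `𝒞` contains an element
`≥ 2k - 1`, the members live in a ground set of at most `2k - 1` elements, where the local LYM
inequality gives `|𝒞| ≤ |∂𝒞|`. Otherwise fix such an element `x` of a member of `𝒞`, and let `𝒟` be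
the link and `ℰ` the deletion of `x`. Every `k`-subset of `{0, …, x - 1}` precedes that member, so
`|ℰ| ≥ C(2k-1, k)` and hence `|𝒟| ≤ ξ_k - C(2k-1, k) = ξ_{k-1}`. Both families are smaller than
`𝒞`, and `|∂𝒟| + |∂ℰ| ≤ |∂𝒞|`, so induction on the size of the family applies.
-/

open Finset
open scoped FinsetFamily

section Shadow

variable {α β : Type*} {𝒜 : Finset (Finset α)} {r : ℕ}

theorem sized_map_mapEmbedding_iff (f : α ↪ β) :
    (𝒜.map (mapEmbedding f).toEmbedding : Set (Finset β)).Sized r ↔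
      (𝒜 : Set (Finset α)).Sized r := by
  simp [Set.Sized]

theorem exists_map_mapEmbedding_eq {S : Finset α} (h𝒜 : ∀ s ∈ 𝒜, s ⊆ S) :
    ∃ (f : Fin #S ↪ α) (ℬ : Finset (Finset (Fin #S))),
      ℬ.map (mapEmbedding f).toEmbedding = 𝒜 := by
  let f : Fin #S ↪ α := S.equivFin.symm.toEmbedding.trans (.subtype (· ∈ S))
  have hf : univ.map f = S := by
    rw [← map_map, map_univ_equiv, univ_eq_attach, attach_map_val]
  have h𝒜_subset : 𝒜 ⊆ univ.map (mapEmbedding f).toEmbedding := by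
    intro s hs
    obtain ⟨t, -, rfl⟩ := subset_map_iff.1 ((h𝒜 s hs).trans hf.ge)
    exact mem_map_of_mem _ (mem_univ t)
  obtain ⟨ℬ, -, rfl⟩ := subset_map_iff.1 h𝒜_subset
  exact ⟨f, ℬ, rfl⟩

variable [DecidableEq α] [DecidableEq β]

theorem shadow_map_mapEmbedding (f : α ↪ β) (𝒜 : Finset (Finset α)) :
    ∂ (𝒜.map (mapEmbedding f).toEmbedding) = (∂ 𝒜).map (mapEmbedding f).toEmbedding := by
  ext t
  constructor
  · intro ht
    obtain ⟨_, hsf, _, haf, rfl⟩ := mem_shadow_iff.1 ht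
    obtain ⟨s, hs, rfl⟩ := mem_map.1 hsf
    obtain ⟨a, ha, rfl⟩ := mem_map.1 haf
    exact mem_map.2 ⟨s.erase a, erase_mem_shadow hs ha, map_erase f s a⟩
  · intro ht
    obtain ⟨_, hu, rfl⟩ := mem_map.1 ht
    obtain ⟨s, hs, a, ha, rfl⟩ := mem_shadow_iff.1 hu
    exact mem_shadow_iff.2
      ⟨s.map f, mem_map_of_mem _ hs, f a, mem_map_of_mem f ha, (map_erase f s a).symm⟩

theorem card_mul_le_card_shadow_mul_of_forall_subset (h𝒜 : (𝒜 : Set (Finset α)).Sized r)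
    {S : Finset α} (hS : ∀ s ∈ 𝒜, s ⊆ S) : #𝒜 * r ≤ #(∂ 𝒜) * (#S - r + 1) := by
  obtain ⟨f, ℬ, rfl⟩ := exists_map_mapEmbedding_eq hS
  rw [sized_map_mapEmbedding_iff] at h𝒜
  simpa only [shadow_map_mapEmbedding, card_map, Fintype.card_fin] using
    local_lubell_yamamoto_meshalkin_inequality_mul h𝒜

theorem card_le_card_shadow_of_forall_subset (h𝒜 : (𝒜 : Set (Finset α)).Sized r)
    {S : Finset α} (hS : ∀ s ∈ 𝒜, s ⊆ S) (hSr : #S < 2 * r) : #𝒜 ≤ #(∂ 𝒜) := by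
  refine Nat.le_of_mul_le_mul_right (c := r) ?_ (by lia)
  calc #𝒜 * r ≤ #(∂ 𝒜) * (#S - r + 1) := card_mul_le_card_shadow_mul_of_forall_subset h𝒜 hS
    _ ≤ #(∂ 𝒜) * r := by gcongr; lia

theorem shadow_memberSubfamily_subset (a : α) (𝒜 : Finset (Finset α)) :
    ∂ (𝒜.memberSubfamily a) ⊆ (∂ 𝒜).memberSubfamily a := by
  intro t ht
  obtain ⟨b, hbt, hb⟩ := mem_shadow_iff_insert_mem.1 ht
  obtain ⟨hab, ha⟩ := mem_memberSubfamily.1 hb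
  rw [mem_insert, not_or] at ha
  rw [insert_comm] at hab
  exact mem_memberSubfamily.2 ⟨mem_shadow_iff_insert_mem.2 ⟨b, by grind, hab⟩, ha.2⟩

theorem shadow_nonMemberSubfamily_subset (a : α) (𝒜 : Finset (Finset α)) :
    ∂ (𝒜.nonMemberSubfamily a) ⊆ (∂ 𝒜).nonMemberSubfamily a := by
  intro t ht
  obtain ⟨s, hs, b, hb, rfl⟩ := mem_shadow_iff.1 ht
  obtain ⟨hs𝒜, has⟩ := mem_nonMemberSubfamily.1 hs
  exact mem_nonMemberSubfamily.2 ⟨erase_mem_shadow hs𝒜 hb, fun ha ↦ has (mem_of_mem_erase ha)⟩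

theorem card_shadow_memberSubfamily_add_card_shadow_nonMemberSubfamily_le (a : α)
    (𝒜 : Finset (Finset α)) :
    #(∂ (𝒜.memberSubfamily a)) + #(∂ (𝒜.nonMemberSubfamily a)) ≤ #(∂ 𝒜) := by
  rw [← card_memberSubfamily_add_card_nonMemberSubfamily a (∂ 𝒜)]
  exact add_le_add (card_le_card (shadow_memberSubfamily_subset a 𝒜))
    (card_le_card (shadow_nonMemberSubfamily_subset a 𝒜))

theorem sized_memberSubfamily (h𝒜 : (𝒜 : Set (Finset α)).Sized (r + 1)) (a : α) :
    (𝒜.memberSubfamily a : Set (Finset α)).Sized r := by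
  intro s hs
  obtain ⟨hs𝒜, has⟩ := mem_memberSubfamily.1 (mem_coe.1 hs)
  exact Nat.succ_injective ((card_insert_of_notMem has).symm.trans (h𝒜 hs𝒜))

theorem sized_nonMemberSubfamily (h𝒜 : (𝒜 : Set (Finset α)).Sized r) (a : α) :
    (𝒜.nonMemberSubfamily a : Set (Finset α)).Sized r :=
  h𝒜.mono (coe_subset.2 (filter_subset _ 𝒜))

end Shadow

section InitialSegment

variable {α : Type*} [LinearOrder α] {𝒞 : Finset (Finset α)} {r : ℕ}

theorem powersetCard_Iio_subset_of_isInitSeg [LocallyFiniteOrderBot α]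
    (h𝒞 : Colex.IsInitSeg 𝒞 r) {s : Finset α} (hs : s ∈ 𝒞) {x : α} (hx : x ∈ s) :
    powersetCard r (Iio x) ⊆ 𝒞 := by
  intro t ht
  obtain ⟨htx, htr⟩ := mem_powersetCard.1 ht
  have ht_lt : toColex t < toColex {x} :=
    Colex.toColex_lt_singleton.2 fun b hb ↦ mem_Iio.1 (htx hb)
  have hx_le : toColex {x} ≤ toColex s := Colex.singleton_le_toColex.2 ⟨x, hx, le_rfl⟩
  exact h𝒞.2 hs ⟨ht_lt.trans_le hx_le, htr⟩

theorem choose_card_Iio_le_card_nonMemberSubfamily [LocallyFiniteOrderBot α]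
    (h𝒞 : Colex.IsInitSeg 𝒞 r) {s : Finset α} (hs : s ∈ 𝒞) {x : α} (hx : x ∈ s) :
    (#(Iio x)).choose r ≤ #(𝒞.nonMemberSubfamily x) := by
  rw [← card_powersetCard]
  refine card_le_card fun t ht ↦ mem_nonMemberSubfamily.2
    ⟨powersetCard_Iio_subset_of_isInitSeg h𝒞 hs hx ht, fun hxt ↦ ?_⟩
  exact lt_irrefl x (mem_Iio.1 ((mem_powersetCard.1 ht).1 hxt))

theorem exists_isInitSeg_insert [Fintype α] (h𝒞 : Colex.IsInitSeg 𝒞 r)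
    (hcard : #𝒞 < (Fintype.card α).choose r) :
    ∃ s ∉ 𝒞, Colex.IsInitSeg (insert s 𝒞) r := by
  have hne : (powersetCard r univ \ 𝒞).Nonempty := by
    refine sdiff_nonempty_of_card_lt_card ?_
    rwa [card_powersetCard, card_univ]
  obtain ⟨s, hs, hs_min⟩ := exists_min_image _ toColex hne
  simp only [mem_sdiff, mem_powersetCard_univ] at hs hs_min
  refine ⟨s, hs.2, ?_, ?_⟩
  · rw [coe_insert, Set.insert_eq, Set.sized_union, Set.sized_singleton]
    exact ⟨hs.1, h𝒞.1⟩
  · rintro u t hu ⟨htu, htr⟩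
    rcases mem_insert.1 hu with rfl | hu
    · by_contra ht
      exact (hs_min t ⟨htr, fun ht𝒞 ↦ ht (mem_insert_of_mem ht𝒞)⟩).not_gt htu
    · exact mem_insert_of_mem (h𝒞.2 hu ⟨htu, htr⟩)

theorem exists_isInitSeg_card_eq [Fintype α] {m : ℕ} (hm : m ≤ (Fintype.card α).choose r) :
    ∃ 𝒞 : Finset (Finset α), Colex.IsInitSeg 𝒞 r ∧ #𝒞 = m := by
  induction m with
  | zero => exact ⟨∅, Colex.isInitSeg_empty, card_empty⟩
  | succ m ih =>
    obtain ⟨𝒞, h𝒞, rfl⟩ := ih (Nat.le_of_succ_le hm)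
    obtain ⟨s, hs, hs𝒞⟩ := exists_isInitSeg_insert h𝒞 hm
    exact ⟨insert s 𝒞, hs𝒞, card_insert_of_notMem hs⟩

end InitialSegment

theorem card_le_card_shadow_of_sized_fin {N k : ℕ} {𝒜 : Finset (Finset (Fin N))}
    (h𝒜 : (𝒜 : Set (Finset (Fin N))).Sized k)
    (hcard : #𝒜 ≤ ∑ j ∈ Icc 1 k, (2 * j - 1).choose j) : #𝒜 ≤ #(∂ 𝒜) := by
  induction hm : #𝒜 using Nat.strong_induction_on generalizing k 𝒜 with | _ m ih
  subst hm
  obtain _ | k := k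
  · exact hcard.trans (Nat.zero_le _)
  obtain ⟨𝒞, h𝒞, h𝒞𝒜⟩ := exists_isInitSeg_card_eq (α := Fin N) h𝒜.card_le
  refine le_trans ?_ (kruskal_katona h𝒜 h𝒞𝒜.le h𝒞)
  rw [← h𝒞𝒜] at hcard ih ⊢
  by_cases hlarge : ∃ s ∈ 𝒞, ∃ x ∈ s, 2 * k + 1 ≤ (x : ℕ)
  · obtain ⟨s, hs, x, hxs, hx⟩ := hlarge
    have hsplit := card_memberSubfamily_add_card_nonMemberSubfamily x 𝒞
    have hdeletion : (2 * k + 1).choose (k + 1) ≤ #(𝒞.nonMemberSubfamily x) :=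
      (Nat.choose_le_choose _ (by rwa [Fin.card_Iio])).trans
        (choose_card_Iio_le_card_nonMemberSubfamily h𝒞 hs hxs)
    have hlink : #(𝒞.memberSubfamily x) ≤ ∑ j ∈ Icc 1 k, (2 * j - 1).choose j := by
      rw [sum_Icc_succ_top (Nat.le_add_left 1 k),
        show 2 * (k + 1) - 1 = 2 * k + 1 from rfl] at hcard
      lia
    have hdeletion_pos : 0 < #(𝒞.nonMemberSubfamily x) :=
      (Nat.choose_pos (by lia)).trans_le hdeletion
    have hlink_pos : 0 < #(𝒞.memberSubfamily x) :=
      card_pos.2 ⟨s.erase x, by simpa [hxs] using hs⟩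
    calc #𝒞 = #(𝒞.memberSubfamily x) + #(𝒞.nonMemberSubfamily x) := hsplit.symm
      _ ≤ #(∂ (𝒞.memberSubfamily x)) + #(∂ (𝒞.nonMemberSubfamily x)) :=
        add_le_add (ih _ (by lia) (sized_memberSubfamily h𝒞.1 x) hlink rfl)
          (ih _ (by lia) (sized_nonMemberSubfamily h𝒞.1 x) (by lia) rfl)
      _ ≤ #(∂ 𝒞) := card_shadow_memberSubfamily_add_card_shadow_nonMemberSubfamily_le x 𝒞
  · push Not at hlarge
    refine card_le_card_shadow_of_forall_subset h𝒞.1 (S := {x | (x : ℕ) < 2 * k + 1})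
      (fun s hs x hx ↦ mem_filter_univ x |>.2 (hlarge s hs x hx)) ?_
    rw [Fin.card_filter_val_lt]
    lia

theorem stmt_3_general {α : Type*} [DecidableEq α] (k : ℕ) (𝒜 : Finset (Finset α))
    (h𝒜 : ∀ s ∈ 𝒜, #s = k) (hcard : #𝒜 ≤ ∑ j ∈ Icc 1 k, (2 * j - 1).choose j) :
    #𝒜 ≤ #(∂ 𝒜) := by
  obtain ⟨S, hS⟩ : ∃ S, ∀ s ∈ 𝒜, s ⊆ S := ⟨𝒜.sup id, fun _ hs ↦ le_sup (f := id) hs⟩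
  obtain ⟨f, ℬ, rfl⟩ := exists_map_mapEmbedding_eq hS
  rw [card_map] at hcard
  rw [shadow_map_mapEmbedding, card_map, card_map]
  exact card_le_card_shadow_of_sized_fin ((sized_map_mapEmbedding_iff f).1 h𝒜) hcard

/-- If `𝒜` is a finite family of `k`-element finite subsets of `ℕ` with
`|𝒜| ≤ ξ_k = ∑_{j=1}^k C(2j-1, j)`, then the shadow satisfies `|∂𝒜| ≥ |𝒜|`. -/
theorem stmt_3 (k : ℕ) (hk : 1 ≤ k) (𝒜 : Finset (Finset ℕ))
    (h𝒜 : ∀ s ∈ 𝒜, s.card = k)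
    (hcard : 𝒜.card ≤ ∑ j ∈ Finset.Icc 1 k, Nat.choose (2 * j - 1) j) :
    𝒜.card ≤ 𝒜.shadow.card :=
  stmt_3_general k 𝒜 h𝒜 hcard
end

section
/- Let δ ≥ 3 and n ≥ 2δ. Then there exists a family 𝒜̃ of δ-element subsets of [n+δ-1] = {1,…,n+δ-1} with |𝒜̃| = ξ_δ + 2 and |∂𝒜̃| = ξ_δ + δ (so |∂𝒜̃| > |𝒜̃|), such that 𝒜̃ is not uniformly collapsible. -/
/-!
There are `ξ_k + 1` sets of size `k`, inside `2k` points, whose shadow has only `ξ_k` members: to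
pass from `k` to `k + 1`, take all `(k+1)`-subsets of the first `2k + 1` points and cone the old
family off with the last point. The complete part of the shadow absorbs the base of the cone, so
the family and its shadow grow by `C(2k+1, k+1)` and `C(2k+1, k)`, which are equal. A uniform
collapse would inject this family into its shadow, so no larger family is uniformly collapsible
either; adding one `δ`-set sharing no `(δ-1)`-subset with it adds `δ` new members to the shadow
but keeps the obstruction.
-/

/-- A family `𝒜` of `k`-element finite sets is uniformly collapsible if there is an
injective map `f` on `𝒜` with `f F` a `(k-1)`-element subset of `F` for each `F ∈ 𝒜`. -/
def UniformlyCollapsible {α : Type*} [DecidableEq α] (k : ℕ) (𝒜 : Finset (Finset α)) : Prop :=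
  ∃ f : Finset α → Finset α, Set.InjOn f ↑𝒜 ∧ ∀ F ∈ 𝒜, f F ⊆ F ∧ (f F).card = k - 1

section

open Finset
open scoped FinsetFamily

variable {α : Type*} {𝒜 ℬ : Finset (Finset α)} {s t U V : Finset α} {a : α} {k : ℕ}

lemma notMem_of_subset_powersetCard (ha : a ∉ s) (h𝒜 : 𝒜 ⊆ s.powersetCard k) :
    ∀ t ∈ 𝒜, a ∉ t :=
  fun _ ht hat ↦ ha ((mem_powersetCard.1 (h𝒜 ht)).1 hat)

variable [DecidableEq α]

lemma shadow_union : ∂ (𝒜 ∪ ℬ) = ∂ 𝒜 ∪ ∂ ℬ := sup_union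

lemma shadow_singleton_eq_image_erase : ∂ {t} = t.image t.erase := sup_singleton ..

lemma mem_shadow_singleton : s ∈ ∂ {t} ↔ s ⊆ t ∧ #t = #s + 1 := by
  simp only [mem_shadow_iff_exists_mem_card_add_one, mem_singleton, exists_eq_left]

lemma card_shadow_singleton : #(∂ {t}) = #t := by
  rw [shadow_singleton_eq_image_erase, card_image_of_injOn t.erase_injOn]

lemma shadow_powersetCard_succ (hk : k + 1 ≤ #s) :
    ∂ (s.powersetCard (k + 1)) = s.powersetCard k := by
  ext t
  simp only [mem_shadow_iff_insert_mem, mem_powersetCard, insert_subset_iff]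
  constructor
  · rintro ⟨a, ha, ⟨-, hts⟩, hcard⟩
    exact ⟨hts, by simpa only [card_insert_of_notMem ha, Nat.add_right_cancel_iff] using hcard⟩
  · rintro ⟨hts, rfl⟩
    obtain ⟨a, has, hat⟩ := exists_mem_notMem_of_card_lt_card (Nat.lt_of_succ_le hk)
    exact ⟨a, hat, ⟨has, hts⟩, card_insert_of_notMem hat⟩

lemma notMem_of_mem_shadow (h𝒜 : ∀ s ∈ 𝒜, a ∉ s) : ∀ t ∈ ∂ 𝒜, a ∉ t := fun _ ht hat ↦
  let ⟨s, hs, hts⟩ := exists_subset_of_mem_shadow ht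
  h𝒜 s hs (hts hat)

lemma shadow_image_insert (h𝒜 : ∀ s ∈ 𝒜, a ∉ s) :
    ∂ (𝒜.image (insert a)) = 𝒜 ∪ (∂ 𝒜).image (insert a) := by
  ext t
  simp only [mem_union, mem_image, mem_shadow_iff, exists_exists_and_eq_and]
  constructor
  · rintro ⟨s, hs, b, hb, rfl⟩
    obtain rfl | hbs := mem_insert.1 hb
    · exact .inl (by rwa [erase_insert (h𝒜 s hs)])
    · have hab : a ≠ b := (ne_of_mem_of_not_mem hbs (h𝒜 s hs)).symm
      exact .inr ⟨s.erase b, ⟨s, hs, b, hbs, rfl⟩, (erase_insert_of_ne hab).symm⟩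
  · rintro (ht | ⟨_, ⟨s, hs, b, hbs, rfl⟩, rfl⟩)
    · exact ⟨t, ht, a, mem_insert_self a t, erase_insert (h𝒜 t ht)⟩
    · have hab : a ≠ b := (ne_of_mem_of_not_mem hbs (h𝒜 s hs)).symm
      exact ⟨s, hs, b, mem_insert_of_mem hbs, erase_insert_of_ne hab⟩

lemma disjoint_shadow_shadow_singleton (h : ∀ s ∈ 𝒜, #(s ∩ t) + 1 < #t) :
    Disjoint (∂ 𝒜) (∂ {t}) := by
  refine disjoint_left.2 fun u hu hut ↦ ?_
  obtain ⟨s, hs, hus⟩ := exists_subset_of_mem_shadow hu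
  obtain ⟨hut, hcard⟩ := mem_shadow_singleton.1 hut
  have := card_le_card (subset_inter hus hut)
  have := h s hs
  omega

lemma card_shadow_insert (h : ∀ s ∈ 𝒜, #(s ∩ t) + 1 < #t) :
    #(∂ (insert t 𝒜)) = #(∂ 𝒜) + #t := by
  rw [insert_eq, union_comm, shadow_union,
    card_union_of_disjoint (disjoint_shadow_shadow_singleton h), card_shadow_singleton]

lemma card_union_image_insert (hℬ : ∀ s ∈ ℬ, a ∉ s) (h𝒜 : ∀ s ∈ 𝒜, a ∉ s) :
    #(ℬ ∪ 𝒜.image (insert a)) = #ℬ + #𝒜 := by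
  have hdisj : Disjoint ℬ (𝒜.image (insert a)) := disjoint_left.2 fun s hs hs' ↦ by
    obtain ⟨t, -, rfl⟩ := mem_image.1 hs'
    exact hℬ _ hs (mem_insert_self a t)
  rw [card_union_of_disjoint hdisj, card_image_of_injOn (insert_erase_invOn.2.injOn.mono h𝒜)]

lemma card_powersetCard_union_image_insert (ha : a ∉ s) (h𝒜 : ∀ t ∈ 𝒜, a ∉ t) :
    #(s.powersetCard k ∪ 𝒜.image (insert a)) = (#s).choose k + #𝒜 := by
  rw [card_union_image_insert (notMem_of_subset_powersetCard ha Subset.rfl) h𝒜, card_powersetCard]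

lemma shadow_powersetCard_succ_union_image_insert (ha : a ∉ s) (hk : k + 1 ≤ #s)
    (h𝒜 : 𝒜 ⊆ s.powersetCard k) :
    ∂ (s.powersetCard (k + 1) ∪ 𝒜.image (insert a)) =
      s.powersetCard k ∪ (∂ 𝒜).image (insert a) := by
  rw [shadow_union, shadow_powersetCard_succ hk,
    shadow_image_insert (notMem_of_subset_powersetCard ha h𝒜), ← union_assoc,
    union_eq_left.2 h𝒜]

lemma card_shadow_powersetCard_succ_union_image_insert (ha : a ∉ s) (hk : k + 1 ≤ #s)
    (h𝒜 : 𝒜 ⊆ s.powersetCard k) :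
    #(∂ (s.powersetCard (k + 1) ∪ 𝒜.image (insert a))) = (#s).choose k + #(∂ 𝒜) := by
  rw [shadow_powersetCard_succ_union_image_insert ha hk h𝒜, card_powersetCard_union_image_insert ha
    (notMem_of_mem_shadow (notMem_of_subset_powersetCard ha h𝒜))]

lemma powersetCard_succ_union_image_insert_subset (ha : a ∉ s) (h𝒜 : 𝒜 ⊆ s.powersetCard k) :
    s.powersetCard (k + 1) ∪ 𝒜.image (insert a) ⊆ (insert a s).powersetCard (k + 1) := by
  rw [powersetCard_succ_insert ha]
  exact union_subset_union_right (image_subset_image h𝒜)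

/-- The number `ξ_k = ∑_{j=1}^{k} C(2j-1, j)`: some family of `ξ_k + 1` sets of size `k` has a
shadow of only `ξ_k` sets. The subtraction does not truncate, because `1 ≤ j`. -/
def xi (k : ℕ) : ℕ := ∑ j ∈ Icc 1 k, (2 * j - 1).choose j

lemma xi_succ (k : ℕ) : xi (k + 1) = xi k + (2 * k + 1).choose (k + 1) :=
  sum_Icc_succ_top (Nat.le_add_left 1 k) _

theorem exists_card_eq_xi_add_one_card_shadow_eq_xi (hV : #V = 2 * k) :
    ∃ 𝒜 ⊆ V.powersetCard k, #𝒜 = xi k + 1 ∧ #(∂ 𝒜) = xi k := by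
  induction k generalizing V with
  | zero => exact ⟨{∅}, by simp, by simp [xi], by simp [xi]⟩
  | succ k ih =>
    obtain ⟨a, S, haS, rfl, hS⟩ := card_eq_succ.1 (show #V = 2 * k + 1 + 1 from hV)
    obtain ⟨W, hWS, hW⟩ := exists_subset_card_eq (show 2 * k ≤ #S by omega)
    obtain ⟨𝒜, h𝒜W, hcard, hshadow⟩ := ih hW
    have h𝒜 : 𝒜 ⊆ S.powersetCard k := h𝒜W.trans (powersetCard_mono hWS)
    refine ⟨S.powersetCard (k + 1) ∪ 𝒜.image (insert a),
      powersetCard_succ_union_image_insert_subset haS h𝒜, ?_, ?_⟩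
    · rw [card_powersetCard_union_image_insert haS (notMem_of_subset_powersetCard haS h𝒜), hS,
        hcard, xi_succ]
      ring
    · rw [card_shadow_powersetCard_succ_union_image_insert haS (by omega) h𝒜, hS, hshadow, xi_succ,
        Nat.choose_symm_half, add_comm]

lemma UniformlyCollapsible.mono (h𝒜ℬ : 𝒜 ⊆ ℬ) (hℬ : UniformlyCollapsible k ℬ) :
    UniformlyCollapsible k 𝒜 :=
  let ⟨f, hf, hfsub⟩ := hℬ
  ⟨f, hf.mono (coe_subset.2 h𝒜ℬ), fun s hs ↦ hfsub s (h𝒜ℬ hs)⟩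

lemma UniformlyCollapsible.card_le_card_shadow (hk : k ≠ 0) (h : UniformlyCollapsible k 𝒜)
    (h𝒜 : (𝒜 : Set (Finset α)).Sized k) : #𝒜 ≤ #(∂ 𝒜) := by
  obtain ⟨f, hf, hfsub⟩ := h
  refine card_le_card_of_injOn f (fun s hs ↦ ?_) hf
  obtain ⟨hsub, hcard⟩ := hfsub s hs
  have := h𝒜 hs
  exact mem_shadow_iff_exists_mem_card_add_one.2 ⟨s, hs, hsub, by omega⟩

lemma exists_subset_card_eq_add_card_inter_eq {i j : ℕ} (hi : i ≤ #(U ∩ V)) (hj : j ≤ #(U \ V)) :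
    ∃ t ⊆ U, #t = i + j ∧ #(V ∩ t) = i := by
  obtain ⟨p, hp, rfl⟩ := exists_subset_card_eq hi
  obtain ⟨q, hq, rfl⟩ := exists_subset_card_eq hj
  obtain ⟨hpU, hpV⟩ := subset_inter_iff.1 hp
  obtain ⟨hqU, hqV⟩ := subset_sdiff.1 hq
  refine ⟨p ∪ q, union_subset hpU hqU, card_union_of_disjoint (hqV.symm.mono_left hpV), ?_⟩
  rw [inter_union_distrib_left, inter_eq_right.2 hpV, disjoint_iff_inter_eq_empty.1 hqV.symm,
    union_empty]

theorem stmt_8_general {δ : ℕ} (hδ : 3 ≤ δ) (hU : 2 * δ + 2 ≤ #U) :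
    ∃ 𝒜 ⊆ U.powersetCard δ, #𝒜 = xi δ + 2 ∧ #(∂ 𝒜) = xi δ + δ ∧ #𝒜 < #(∂ 𝒜) ∧
      ¬ UniformlyCollapsible δ 𝒜 := by
  obtain ⟨V, hVU, hV⟩ := exists_subset_card_eq (show 2 * δ ≤ #U by omega)
  obtain ⟨𝒜, h𝒜V, hcard, hshadow⟩ := exists_card_eq_xi_add_one_card_shadow_eq_xi hV
  obtain ⟨t, htU, ht, hVt⟩ := exists_subset_card_eq_add_card_inter_eq (i := δ - 2) (j := 2)
    (by rw [inter_eq_right.2 hVU]; omega) (by rw [card_sdiff_of_subset hVU]; omega)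
  replace ht : #t = δ := by omega
  -- Two points of `t` lie outside `V`, so no `(δ-1)`-subset of `t` is contained in `V`.
  have hinter : ∀ s ∈ 𝒜, #(s ∩ t) + 1 < #t := fun s hs ↦ by
    have := card_le_card (inter_subset_inter_right (u := t) (mem_powersetCard.1 (h𝒜V hs)).1)
    omega
  have ht𝒜 : t ∉ 𝒜 := fun h ↦ by
    have := hinter t h
    rw [inter_self] at this
    omega
  have hcard' : #(insert t 𝒜) = xi δ + 2 := by rw [card_insert_of_notMem ht𝒜, hcard]
  have hshadow' : #(∂ (insert t 𝒜)) = xi δ + δ := by rw [card_shadow_insert hinter, hshadow, ht]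
  refine ⟨insert t 𝒜, insert_subset (mem_powersetCard.2 ⟨htU, ht⟩)
    (h𝒜V.trans (powersetCard_mono hVU)), hcard', hshadow', by omega, fun hcoll ↦ ?_⟩
  have := (hcoll.mono (subset_insert t 𝒜)).card_le_card_shadow (by omega)
    fun s hs ↦ (mem_powersetCard.1 (h𝒜V hs)).2
  omega

end

/-- For `δ ≥ 3` and `n ≥ 2δ`, there is a family `𝒜̃` of `δ`-element subsets of
`[n+δ-1]` with `|𝒜̃| = ξ_δ + 2` and `|∂𝒜̃| = ξ_δ + δ` (so `|∂𝒜̃| > |𝒜̃|`), yet `𝒜̃` is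
not uniformly collapsible. -/
theorem stmt_8 (δ n : ℕ) (hδ : 3 ≤ δ) (hn : 2 * δ ≤ n) :
    ∃ 𝒜 : Finset (Finset (Fin (n + δ - 1))), (∀ s ∈ 𝒜, s.card = δ) ∧
      𝒜.card = (∑ j ∈ Finset.Icc 1 δ, Nat.choose (2 * j - 1) j) + 2 ∧
      𝒜.shadow.card = (∑ j ∈ Finset.Icc 1 δ, Nat.choose (2 * j - 1) j) + δ ∧
      𝒜.card < 𝒜.shadow.card ∧
      ¬ UniformlyCollapsible δ 𝒜 := by
  obtain ⟨𝒜, h𝒜, h⟩ := stmt_8_general (U := (Finset.univ : Finset (Fin (n + δ - 1)))) hδ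
    (by rw [Finset.card_fin]; omega)
  exact ⟨𝒜, fun s hs ↦ (Finset.mem_powersetCard.1 (h𝒜 hs)).2, h⟩
end
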